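/- For the weight vector w given in the context: (i) for each of the 270 trinomial generators f of I_X, the initial form in_w(f) is not a monomial; and (ii) the monomial E₆·F₅₆·G₆ belongs to the initial ideal in_w(I_X). Consequently w lies in the tropical prevariety of the 270 trinomial generators but not in the tropical variety of I_X, so the 270 trinomial generators of the Cox ring ideal of a generic smooth cubic surface are not a tropical basis (Theorem 3.2, disproving Conjecture 5.3 of [RSS16]). -/

import Mathlib

open MvPolynomial

noncomputable section

/-- The `w`-weight `⟨w, m⟩` of an exponent vector / monomial `m`. -/
def mWeight {σ : Type*} (w : σ → ℝ) (m : σ →₀ ℕ) : ℝ :=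
  m.sum fun i e => w i * e

/-- The initial form `in_w(f)`: the sum of the terms of `f` whose `w`-weight is
minimal among all terms of `f` (min-convention, trivial valuation). -/
def initialForm {σ K : Type*} [CommRing K] (w : σ → ℝ) (f : MvPolynomial σ K) :
    MvPolynomial σ K :=
  (f.support.filter fun m => ∀ m' ∈ f.support, mWeight w m ≤ mWeight w m').sum
    fun m => monomial m (f.coeff m)

/-- A polynomial is a monomial if it equals `c · x^m` for a single exponent
vector `m` and a nonzero coefficient `c`. -/
def IsMonomial {σ K : Type*} [CommRing K] (f : MvPolynomial σ K) : Prop :=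
  ∃ (m : σ →₀ ℕ) (c : K), c ≠ 0 ∧ f = monomial m c

/-- The initial ideal `in_w(I)`: the ideal generated by the initial forms of
all nonzero elements of `I`. -/
def initialIdeal {σ K : Type*} [CommRing K] (w : σ → ℝ)
    (I : Ideal (MvPolynomial σ K)) : Ideal (MvPolynomial σ K) :=
  Ideal.span {g | ∃ h ∈ I, h ≠ 0 ∧ g = initialForm w h}


/-! ### The Cox ring of a smooth cubic surface

The base field is `K = ℚ(d₁,…,d₆)` (generic parameters), and the polynomial
ring has the 27 variables `E₁,…,E₆`, `F_{ij}` (for unordered pairs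
`{i,j} ⊆ {1,…,6}`), `G₁,…,G₆`, indexed by `Fin 6` (so indices are shifted
down by one). -/

/-- The field `ℚ(d₁,…,d₆)` of rational functions in six variables. -/
abbrev KK : Type := FractionRing (MvPolynomial (Fin 6) ℚ)

/-- The parameter `d_i` as an element of `ℚ(d₁,…,d₆)`. -/
def dK (i : Fin 6) : KK := algebraMap (MvPolynomial (Fin 6) ℚ) KK (X i)

/-- Index type for the 27 variables: `Sum.inl i` is `E_i`, `Sum.inr (Sum.inl s)`
is `F_{ij}` for the unordered (off-diagonal) pair `s = {i,j}`, and
`Sum.inr (Sum.inr i)` is `G_i`. -/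
def CVar : Type :=
  Fin 6 ⊕ ({s : Sym2 (Fin 6) // ¬ s.IsDiag} ⊕ Fin 6)

/-- The variable `E_i`. -/
def Ev (i : Fin 6) : MvPolynomial CVar KK := X (Sum.inl i)

/-- The variable `F_{ij}` (junk value `0` when `i = j`). -/
def Fv (i j : Fin 6) : MvPolynomial CVar KK :=
  if h : ¬ (s(i, j) : Sym2 (Fin 6)).IsDiag
  then X (Sum.inr (Sum.inl ⟨s(i, j), h⟩)) else 0

/-- The variable `G_i`. -/
def Gv (i : Fin 6) : MvPolynomial CVar KK := X (Sum.inr (Sum.inr i))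

/-- The trinomial
`T_{i,jkl} = (d_k−d_l)(d_i+d_k+d_l) E_j F_{ij} − (d_j−d_l)(d_i+d_j+d_l) E_k F_{ik}
 + (d_j−d_k)(d_i+d_j+d_k) E_l F_{il}`. -/
def T (i j k l : Fin 6) : MvPolynomial CVar KK :=
  C ((dK k - dK l) * (dK i + dK k + dK l)) * (Ev j * Fv i j) -
    C ((dK j - dK l) * (dK i + dK j + dK l)) * (Ev k * Fv i k) +
    C ((dK j - dK k) * (dK i + dK j + dK k)) * (Ev l * Fv i l)

/-- The weight vector `w` from the paper (Theorem on cubic surfaces):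
`E = (2,1,0,1,1,1)`, `F₁₃ = 2`, `F₂₃ = F₃₄ = F₃₅ = F₃₆ = 1`, all remaining
`F`- and `G`-weights `0` (indices shifted down by one). -/
def wCox : CVar → ℝ
  | Sum.inl i => ![2, 1, 0, 1, 1, 1] i
  | Sum.inr (Sum.inl s) =>
      if s.val = s(0, 2) then 2
      else if s.val = s(1, 2) ∨ s.val = s(2, 3) ∨ s.val = s(2, 4) ∨ s.val = s(2, 5)
      then 1 else 0
  | Sum.inr (Sum.inr _) => 0

/-! ### Pinning down the 270 trinomial generators of `I_X`

The cubic surface `X` is the blow-up of `ℙ²` in the six points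
`p_i = (1 : d_i : d_i³)`.  The (saturated) Cox ideal is the kernel of the map
sending each of the 27 variables to the corresponding section, realized below
inside the fraction field of `K[x,y,z,t₁,…,t₆]`:
`E_i ↦ t_i`, `F_{ij} ↦ ℓ_{ij}/((d_j−d_i) t_i t_j)` (where `ℓ_{ij}` is the
equation of the line through `p_i, p_j`), and `G_i ↦ q_i / ∏_{m≠i} t_m`
(where `q_i` is the equation of the conic through the five points `p_m`,
`m ≠ i`).  The 270 trinomial generators of `I_X` (the ten trinomials
`T_{1,jkl}` together with their 260 translates under the Weyl group `W(E₆)`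
acting on the 27 lines) are exactly the trinomial relations supported on
three reducible members of one of the 27 conic bundle classes; below they are
characterized as: elements of the kernel which are sums of three terms, each
a product of two distinct variables, all three of the same `ℤ⁷`-multidegree
(for the Picard grading `deg E_i = e_i`, `deg F_{ij} = e₀−e_i−e_j`,
`deg G_i = 2e₀−∑_{j≠i} e_j`). -/

/-- Auxiliary polynomial ring `K[x,y,z,t₁,…,t₆]` (variables `0,1,2` are
`x,y,z`; variable `3+i` is `t_i`). -/
abbrev SRing : Type := MvPolynomial (Fin 9) KK

/-- Its fraction field. -/
abbrev LF : Type := FractionRing SRing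

/-- The coordinates `x, y, z` in `LF`. -/
def xL (a : Fin 3) : LF := algebraMap SRing LF (X (a.castLE (by omega)))

/-- The variables `t_i` in `LF`. -/
def tL (i : Fin 6) : LF := algebraMap SRing LF (X (i.addNat 3))

/-- The parameter `d_i` in `LF`. -/
def dL (i : Fin 6) : LF := algebraMap SRing LF (C (dK i))

/-- The linear form `ℓ_{ij}` cutting out the line through
`p_i = (1:d_i:d_i³)` and `p_j = (1:d_j:d_j³)`. -/
def ellL (i j : Fin 6) : LF :=
  Matrix.det !![xL 0, xL 1, xL 2; 1, dL i, dL i ^ 3; 1, dL j, dL j ^ 3]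

/-- The `r`-th element (in increasing order) of `{1,…,6} ∖ {i}`. -/
def cpl (i : Fin 6) (r : Fin 5) : Fin 6 :=
  ((Finset.univ.erase i).orderIsoOfFin
    (by rw [Finset.card_erase_of_mem (Finset.mem_univ i)]; simp) r).val

/-- The quadratic form `q_i` cutting out the conic through the five points
`p_m = (1:d_m:d_m³)`, `m ≠ i` (a 6×6 determinant in the conic monomials). -/
def conicL (i : Fin 6) : LF :=
  Matrix.det (Matrix.of fun r c : Fin 6 =>
    Fin.cases
      (![xL 0 ^ 2, xL 0 * xL 1, xL 1 ^ 2, xL 0 * xL 2, xL 1 * xL 2, xL 2 ^ 2] c)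
      (fun r' =>
        ![1, dL (cpl i r'), dL (cpl i r') ^ 2, dL (cpl i r') ^ 3,
          dL (cpl i r') ^ 4, dL (cpl i r') ^ 6] c)
      r)

/-- The realization map: its kernel is the (saturated) Cox ideal of `X`. -/
def phiC : MvPolynomial CVar KK →ₐ[KK] LF :=
  aeval fun v => match v with
    | Sum.inl i => tL i
    | Sum.inr (Sum.inl s) =>
        ellL s.val.inf s.val.sup /
          ((dL s.val.sup - dL s.val.inf) * (tL s.val.inf * tL s.val.sup))
    | Sum.inr (Sum.inr i) => conicL i / ∏ m ∈ Finset.univ.erase i, tL m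

/-- The `ℤ⁷`-multidegree (Picard grading) of the 27 variables. -/
def picDeg : CVar → Fin 7 → ℤ
  | Sum.inl i => Pi.single i.succ 1
  | Sum.inr (Sum.inl s) =>
      Pi.single 0 1 - Pi.single (Fin.succ s.val.inf) 1 -
        Pi.single (Fin.succ s.val.sup) 1
  | Sum.inr (Sum.inr i) =>
      (Pi.single 0 2 + Pi.single i.succ 1) - ∑ j : Fin 6, Pi.single (Fin.succ j) 1

/-- The `ℤ⁷`-multidegree of a monomial (exponent vector). -/
def picDegM (m : CVar →₀ ℕ) : Fin 7 → ℤ :=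
  ∑ v ∈ m.support, (m v : ℤ) • picDeg v

/-!
Each conic bundle of the surface has five reducible fibres, of which at most one exceeds the least
weight; so every trinomial relation between three of them attains its least weight twice.

There are only `27 · 10` triples of reducible fibres of a conic bundle, hence the 270 generators,
having distinct supports, realise all of them. Combining four of them gives, with indices starting
at `0`, an element `F₀₂ F₁₄ F₃₄ - a E₀ F₀₄ G₅ - b E₅ F₂₄ G₂ - κ E₅ F₄₅ G₅` of the ideal, whose last
monomial has weight `1` while the others have weight `2`. It remains to see that `κ ≠ 0`. Up to a
common factor, the sections of the first three monomials are the plane cubics `ℓ₀₂ ℓ₁₄ ℓ₃₄`,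
`ℓ₀₄ q₅` and `ℓ₂₄ q₂`; evaluation at a zero of `q₂` and at a zero of `ℓ₂₄` shows that the first is
not a combination of the other two.
-/


section InitialForm

variable {σ K : Type*}

lemma mWeight_add (w : σ → ℝ) (m n : σ →₀ ℕ) :
    mWeight w (m + n) = mWeight w m + mWeight w n :=
  Finsupp.sum_add_index' (by simp) (by intros; push_cast; ring)

lemma mWeight_single_one (w : σ → ℝ) (v : σ) : mWeight w (Finsupp.single v 1) = w v := by
  simp [mWeight]

lemma coeff_initialForm [CommRing K] (w : σ → ℝ) (f : MvPolynomial σ K)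
    (m : σ →₀ ℕ) :
    (initialForm w f).coeff m =
      if ∀ n ∈ f.support, mWeight w m ≤ mWeight w n then f.coeff m else 0 := by
  classical
  simp only [initialForm, coeff_sum, coeff_monomial, Finset.sum_ite_eq', Finset.mem_filter,
    mem_support_iff]
  split_ifs <;> simp_all

lemma not_isMonomial_initialForm [CommRing K] {w : σ → ℝ} {f : MvPolynomial σ K}
    (h : ∀ m ∈ f.support, ∃ n ∈ f.support, n ≠ m ∧ mWeight w n ≤ mWeight w m) :
    ¬ IsMonomial (initialForm w f) := by
  classical
  rintro ⟨m, c, hc, hf⟩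
  have hm : (initialForm w f).coeff m ≠ 0 := by simpa [hf] using hc
  rw [coeff_initialForm] at hm
  obtain ⟨hmin, hmf⟩ := ite_ne_right_iff.1 hm
  obtain ⟨n, hn, hnm, hle⟩ := h m (mem_support_iff.2 hmf)
  have hn0 : (initialForm w f).coeff n = 0 := by simp [hf, coeff_monomial, hnm.symm]
  rw [coeff_initialForm, if_pos fun k hk => hle.trans (hmin k hk)] at hn0
  exact mem_support_iff.1 hn hn0

lemma initialForm_monomial_add [CommRing K] {w : σ → ℝ} {m : σ →₀ ℕ} {κ : K}
    {r : MvPolynomial σ K} (hκ : κ ≠ 0)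
    (hr : r ∈ restrictSupport K {n | mWeight w m < mWeight w n}) :
    initialForm w (monomial m κ + r) = monomial m κ := by
  classical
  have hlt : ∀ n, r.coeff n ≠ 0 → mWeight w m < mWeight w n := fun n hn =>
    (mem_restrictSupport_iff K).1 hr (mem_support_iff.2 hn)
  have hrm : r.coeff m = 0 := by_contra fun h => (hlt m h).false
  have hmem : m ∈ (monomial m κ + r).support := by simpa [hrm] using hκ
  ext n
  rw [coeff_initialForm, coeff_add, coeff_monomial]
  split_ifs with hmin hmn hmn
  · rw [← hmn, hrm, add_zero]
  · rw [zero_add]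
    exact by_contra fun h => (hlt n h).not_ge (hmin m hmem)
  · refine absurd (fun k hk => ?_) hmin
    subst hmn
    by_cases hk' : m = k
    · rw [hk']
    · refine (hlt k ?_).le
      simpa [coeff_monomial, hk'] using hk
  · rfl

lemma monomial_mem_initialIdeal [Field K] {w : σ → ℝ} {I : Ideal (MvPolynomial σ K)}
    {m : σ →₀ ℕ} {κ : K} {r : MvPolynomial σ K} (hκ : κ ≠ 0)
    (hr : r ∈ restrictSupport K {n | mWeight w m < mWeight w n})
    (hmem : monomial m κ + r ∈ I) : monomial m 1 ∈ initialIdeal w I := by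
  have hin := initialForm_monomial_add hκ hr
  have hne : monomial m κ + r ≠ 0 := by
    intro h0
    rw [h0] at hin
    exact hκ (by simpa [initialForm] using hin.symm)
  have := (initialIdeal w I).mul_mem_left (C κ⁻¹) (Ideal.subset_span ⟨_, hmem, hne, hin.symm⟩)
  rwa [C_mul_monomial, inv_mul_cancel₀ hκ] at this

lemma exists_combination_mem_of_support_eq [Field K] [DecidableEq (σ →₀ ℕ)]
    {I : Ideal (MvPolynomial σ K)} {g : MvPolynomial σ K} (hg : g ∈ I) {l m n : σ →₀ ℕ}
    (hcard : g.support.card = 3) (hsupp : g.support = {l, m, n}) :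
    ∃ a b : K, monomial l 1 - monomial m a - monomial n b ∈ I := by
  obtain ⟨hlm, hln, hmn⟩ := Finset.card_triple_eq_three_iff.1 (hsupp ▸ hcard)
  have hl : g.coeff l ≠ 0 := mem_support_iff.1 (by simp [hsupp])
  have hsum : g = monomial l (g.coeff l) + (monomial m (g.coeff m) + monomial n (g.coeff n)) := by
    conv_lhs => rw [g.as_sum, hsupp]
    rw [Finset.sum_insert (by simp [hlm, hln]), Finset.sum_pair hmn]
  refine ⟨-((g.coeff l)⁻¹ * g.coeff m), -((g.coeff l)⁻¹ * g.coeff n), ?_⟩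
  have hmul : C (g.coeff l)⁻¹ * g ∈ I := I.mul_mem_left _ hg
  generalize g.coeff l = α, g.coeff m = β, g.coeff n = γ at *
  rw [hsum] at hmul
  simpa only [mul_add, C_mul_monomial, inv_mul_cancel₀ hl, map_neg, sub_neg_eq_add,
    add_assoc] using hmul

end InitialForm

section UnorderedPairs

variable {α M : Type*}

/-- The value `f u + f v` on an unordered pair `s(u, v)`; it gives the exponent vector, the
Picard degree and the weight of a product of two variables. -/
def pairSum [AddCommMonoid M] (f : α → M) : Sym2 α → M :=
  Sym2.lift ⟨fun u v => f u + f v, fun _ _ => add_comm _ _⟩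

/-- The exponent vector of the quadratic monomial `x_u x_v`. -/
def pairExponent : Sym2 α → α →₀ ℕ :=
  pairSum fun v => Finsupp.single v 1

lemma pairExponent_injective : Function.Injective (pairExponent (α := α)) := by
  intro p q
  induction p with | _ u v
  induction q with | _ a b
  intro h
  have := (Finsupp.single_add_single_eq_single_add_single one_ne_zero one_ne_zero).1 h
  simpa [Sym2.eq_iff] using this

lemma mWeight_pairExponent (w : α → ℝ) (p : Sym2 α) :
    mWeight w (pairExponent p) = pairSum w p := by
  induction p with | _ u v
  exact (mWeight_add w _ _).trans (by simp only [mWeight_single_one]; rfl)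

end UnorderedPairs

section ConicBundles

instance : DecidableEq CVar :=
  inferInstanceAs (DecidableEq (Fin 6 ⊕ ({s : Sym2 (Fin 6) // ¬ s.IsDiag} ⊕ Fin 6)))

instance : Fintype CVar :=
  inferInstanceAs (Fintype (Fin 6 ⊕ ({s : Sym2 (Fin 6) // ¬ s.IsDiag} ⊕ Fin 6)))

/-- The intersection form, of signature `(1, 6)`, on the Picard lattice `ℤ⁷`. -/
def interForm (p q : Fin 7 → ℤ) : ℤ :=
  p 0 * q 0 - ∑ i : Fin 6, p i.succ * q i.succ

/-- The anticanonical class `-K = 3e₀ - e₁ - ⋯ - e₆`. -/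
def antiK : Fin 7 → ℤ :=
  Fin.cons 3 fun _ => -1

lemma interForm_add (p q r : Fin 7 → ℤ) : interForm p (q + r) = interForm p q + interForm p r := by
  simp only [interForm, Pi.add_apply, mul_add, Finset.sum_add_distrib]
  ring

lemma interForm_picDeg_self : ∀ u, interForm (picDeg u) (picDeg u) = -1 := by
  decide +kernel

lemma interForm_picDeg_nonneg : ∀ u v, u ≠ v → 0 ≤ interForm (picDeg u) (picDeg v) := by
  decide +kernel

/-- Two lines meeting in a point span a tritangent plane, which contains a third line. -/
lemma interForm_picDeg_eq_zero_or_exists : ∀ u v, u ≠ v →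
    interForm (picDeg u) (picDeg v) = 0 ∨ ∃ c, picDeg u + picDeg v + picDeg c = antiK := by
  decide +kernel

lemma eq_of_interForm_picDeg_neg {u v : CVar} (h : interForm (picDeg u) (picDeg v) < 0) :
    u = v :=
  by_contra fun hne => (interForm_picDeg_nonneg u v hne).not_gt h

lemma picDeg_injective : Function.Injective picDeg := fun u v h =>
  eq_of_interForm_picDeg_neg (by rw [← h, interForm_picDeg_self]; norm_num)

lemma pair_eq_of_interForm_eq_zero {u v a b : CVar}
    (h0 : interForm (picDeg u) (picDeg v) = 0)
    (h : picDeg u + picDeg v = picDeg a + picDeg b) : s(u, v) = s(a, b) := by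
  have hneg : interForm (picDeg u) (picDeg a) + interForm (picDeg u) (picDeg b) = -1 := by
    rw [← interForm_add, ← h, interForm_add, interForm_picDeg_self, h0, add_zero]
  by_cases hua : u = a
  · subst hua
    rw [picDeg_injective (add_left_cancel h)]
  · have := interForm_picDeg_nonneg u a hua
    obtain rfl : u = b := eq_of_interForm_picDeg_neg (by omega)
    rw [add_comm (picDeg a)] at h
    rw [picDeg_injective (add_left_cancel h), Sym2.eq_swap]

/-- The reducible fibres of the conic bundle of class `-K - [c]`, each given by its two
components: they are the pairs of lines completing `c` to a tritangent plane section. -/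
def conicFibres (c : CVar) : Finset (Sym2 CVar) :=
  Finset.univ.sym2.filter fun p => pairSum picDeg p + picDeg c = antiK

lemma card_conicFibres : ∀ c, (conicFibres c).card = 5 := by
  decide +kernel

/-- The weight vector `wCox` with values in `ℕ`, where comparisons are decidable. -/
def natWeight : CVar → ℕ
  | Sum.inl i => ![2, 1, 0, 1, 1, 1] i
  | Sum.inr (Sum.inl s) =>
      if s.val = s(0, 2) then 2
      else if s.val = s(1, 2) ∨ s.val = s(2, 3) ∨ s.val = s(2, 4) ∨ s.val = s(2, 5)
      then 1 else 0
  | Sum.inr (Sum.inr _) => 0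

lemma wCox_eq_natWeight (v : CVar) : wCox v = natWeight v := by
  rcases v with i | s | i
  · fin_cases i <;> simp [wCox, natWeight]
  · simp only [wCox, natWeight]
    split_ifs <;> simp
  · simp [wCox, natWeight]

/-- Consequently the least weight is attained at least twice among any three of the fibres. -/
lemma exists_le_and_card_filter_lt_le_one : ∀ c, ∃ n < 3,
    (∀ p ∈ conicFibres c, n ≤ pairSum natWeight p) ∧
      ((conicFibres c).filter fun p => n < pairSum natWeight p).card ≤ 1 := by
  decide +kernel

end ConicBundles

section ConicTrinomials

variable {R : Type*} [CommRing R]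

/-- A trinomial in three products of two distinct variables, homogeneous for the Picard grading.
Up to its coefficients this is one of the 270 generators: a relation between three reducible
fibres of a conic bundle. -/
structure IsConicTrinomial (g : MvPolynomial CVar R) : Prop where
  card_support : g.support.card = 3
  quadratic : ∀ m ∈ g.support, ∃ u v, u ≠ v ∧ m = Finsupp.single u 1 + Finsupp.single v 1
  homogeneous : ∀ m ∈ g.support, ∀ n ∈ g.support, picDegM m = picDegM n

lemma picDegM_pairExponent (p : Sym2 CVar) : picDegM (pairExponent p) = pairSum picDeg p := by
  induction p with | _ u v
  change (Finsupp.single u 1 + Finsupp.single v 1).sum (fun v n => (n : ℤ) • picDeg v) = _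
  rw [Finsupp.sum_add_index' (by simp) (by intros; push_cast; rw [add_smul])]
  simp [pairSum]

lemma IsConicTrinomial.exists_support_eq {g : MvPolynomial CVar R} (hg : IsConicTrinomial g) :
    ∃ c, ∃ S ∈ (conicFibres c).powersetCard 3, g.support = S.image pairExponent := by
  have hpair : ∀ m ∈ g.support, ∃ u v, u ≠ v ∧ m = pairExponent s(u, v) := hg.quadratic
  obtain ⟨m, hm, n, hn, hmn⟩ := Finset.one_lt_card.1 (by rw [hg.card_support]; norm_num)
  obtain ⟨u, v, huv, rfl⟩ := hpair m hm
  obtain ⟨a, b, -, rfl⟩ := hpair n hn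
  have hdeg : ∀ p, pairExponent p ∈ g.support → pairSum picDeg p = picDeg u + picDeg v :=
    fun p hp => by
      rw [← picDegM_pairExponent, hg.homogeneous _ hp _ hm, picDegM_pairExponent]
      rfl
  obtain ⟨c, hc⟩ := (interForm_picDeg_eq_zero_or_exists u v huv).resolve_left fun h0 =>
    hmn (congrArg _ (pair_eq_of_interForm_eq_zero h0 (hdeg _ hn).symm))
  obtain ⟨S, hS⟩ : ∃ S : Finset (Sym2 CVar), g.support = S.image pairExponent := by
    refine ⟨g.support.preimage _ pairExponent_injective.injOn, ?_⟩
    rw [Finset.image_preimage, Finset.filter_true_of_mem]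
    intro m hm
    obtain ⟨u, v, -, rfl⟩ := hpair m hm
    exact Set.mem_range_self _
  refine ⟨c, S, Finset.mem_powersetCard.2 ⟨fun p hp => ?_, ?_⟩, hS⟩
  · have hp' := hdeg p (hS ▸ Finset.mem_image_of_mem _ hp)
    rw [conicFibres, Finset.mem_filter, hp', Finset.mem_sym2_iff]
    exact ⟨fun _ _ => Finset.mem_univ _, hc⟩
  · rw [← Finset.card_image_of_injective S pairExponent_injective, ← hS, hg.card_support]

lemma IsConicTrinomial.not_isMonomial_initialForm_wCox {g : MvPolynomial CVar R}
    (hg : IsConicTrinomial g) : ¬ IsMonomial (initialForm wCox g) := by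
  obtain ⟨c, S, hS, hsupp⟩ := hg.exists_support_eq
  obtain ⟨hSc, hS3⟩ := Finset.mem_powersetCard.1 hS
  obtain ⟨n, -, hn, hcard⟩ := exists_le_and_card_filter_lt_le_one c
  have hweight : ∀ p : Sym2 CVar, mWeight wCox (pairExponent p) = pairSum natWeight p := by
    intro p
    rw [mWeight_pairExponent]
    induction p with | _ u v
    simp [pairSum, wCox_eq_natWeight]
  refine not_isMonomial_initialForm ?_
  simp only [hsupp, Finset.forall_mem_image, Finset.exists_mem_image, hweight,
    pairExponent_injective.ne_iff, Nat.cast_le]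
  intro p hp
  have hlt : ((conicFibres c).filter fun q => n < pairSum natWeight q).card <
      (S.erase p).card := by
    rw [Finset.card_erase_of_mem hp, hS3]
    omega
  obtain ⟨q, hq, hqn⟩ := Finset.exists_mem_notMem_of_card_lt_card hlt
  obtain ⟨hqp, hqS⟩ := Finset.mem_erase.1 hq
  refine ⟨q, hqS, hqp, le_trans ?_ (hn p (hSc hp))⟩
  simpa [hSc hqS] using hqn

/-- The `27 · 10` possible supports of a conic trinomial. -/
def conicSupports : Finset (Finset (CVar →₀ ℕ)) :=
  Finset.univ.biUnion fun c =>
    ((conicFibres c).powersetCard 3).image fun S => S.image pairExponent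

lemma card_conicSupports_le : conicSupports.card ≤ 270 := by
  refine Finset.card_biUnion_le_card_mul _ _ 10 (fun c _ => ?_) |>.trans (by decide)
  refine Finset.card_image_le.trans ?_
  rw [Finset.card_powersetCard, card_conicFibres]
  decide

lemma IsConicTrinomial.support_mem_conicSupports {g : MvPolynomial CVar R}
    (hg : IsConicTrinomial g) : g.support ∈ conicSupports := by
  obtain ⟨c, S, hS, hsupp⟩ := hg.exists_support_eq
  exact Finset.mem_biUnion.2 ⟨c, Finset.mem_univ c, Finset.mem_image.2 ⟨S, hS, hsupp.symm⟩⟩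

lemma exists_support_eq_of_mem_conicSupports {G : Finset (MvPolynomial CVar R)}
    (hcard : G.card = 270) (hG : ∀ g ∈ G, IsConicTrinomial g)
    (hinj : Set.InjOn support (G : Set (MvPolynomial CVar R))) {M : Finset (CVar →₀ ℕ)}
    (hM : M ∈ conicSupports) : ∃ g ∈ G, g.support = M :=
  Finset.surjOn_of_injOn_of_card_le support (fun g hg => (hG g hg).support_mem_conicSupports) hinj
    (card_conicSupports_le.trans hcard.ge) hM

lemma exists_combination_mem_span_of_mem_conicFibres {K : Type*} [Field K]
    {G : Finset (MvPolynomial CVar K)}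
    (hcard : G.card = 270) (hG : ∀ g ∈ G, IsConicTrinomial g)
    (hinj : Set.InjOn support (G : Set (MvPolynomial CVar K))) {c u₁ v₁ u₂ v₂ u₃ v₃ : CVar}
    (h : {s(u₁, v₁), s(u₂, v₂), s(u₃, v₃)} ∈ (conicFibres c).powersetCard 3) :
    ∃ a b : K, X u₁ * X v₁ - C a * (X u₂ * X v₂) - C b * (X u₃ * X v₃) ∈
      Ideal.span (G : Set (MvPolynomial CVar K)) := by
  obtain ⟨g, hg, hsupp⟩ := exists_support_eq_of_mem_conicSupports hcard hG hinj
    (Finset.mem_biUnion.2 ⟨c, Finset.mem_univ c, Finset.mem_image_of_mem _ h⟩)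
  have hX : ∀ (u v : CVar) (a : K), monomial (pairExponent s(u, v)) a = C a * (X u * X v) := by
    intro u v a
    rw [X, X, monomial_mul, C_mul_monomial, one_mul, mul_one]
    rfl
  rw [Finset.image_insert, Finset.image_insert, Finset.image_singleton] at hsupp
  simpa only [hX, C_1, one_mul] using
    exists_combination_mem_of_support_eq (Ideal.subset_span hg) (hG g hg).card_support hsupp

end ConicTrinomials

section PlaneForms

variable {A B : Type*} [CommRing A] [CommRing B]

/-- The point `(1 : t : t³)` of the cuspidal cubic carrying the six blown-up points. -/
def cuspPoint (t : A) : Fin 3 → A :=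
  ![1, t, t ^ 3]

/-- The quadratic monomials in the coordinates of a point of the plane. -/
def veronese (x : Fin 3 → A) : Fin 6 → A :=
  ![x 0 ^ 2, x 0 * x 1, x 1 ^ 2, x 0 * x 2, x 1 * x 2, x 2 ^ 2]

/-- The linear form in `x` of the line through the `i`-th and the `j`-th of the points with
parameters `d`. -/
def lineForm (d : Fin 6 → A) (i j : Fin 6) (x : Fin 3 → A) : A :=
  Matrix.det (Matrix.of ![x, cuspPoint (d i), cuspPoint (d j)])

/-- The quadratic form in `x` of the conic through the points with parameters `d`, the `i`-th one
excepted. -/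
def conicForm (d : Fin 6 → A) (i : Fin 6) (x : Fin 3 → A) : A :=
  Matrix.det (Matrix.of (Fin.cons (veronese x) fun r => veronese (cuspPoint (d (i.succAbove r)))))

lemma comp_cuspPoint (f : A →+* B) (t : A) : f ∘ cuspPoint t = cuspPoint (f t) := by
  ext a
  fin_cases a <;> simp [cuspPoint]

lemma comp_veronese (f : A →+* B) (x : Fin 3 → A) : f ∘ veronese x = veronese (f ∘ x) := by
  ext a
  fin_cases a <;> simp [veronese]

lemma map_lineForm (f : A →+* B) (d : Fin 6 → A) (i j : Fin 6) (x : Fin 3 → A) :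
    f (lineForm d i j x) = lineForm (f ∘ d) i j (f ∘ x) := by
  simp [lineForm, Matrix.det_fin_three, cuspPoint]

lemma map_conicForm (f : A →+* B) (d : Fin 6 → A) (i : Fin 6) (x : Fin 3 → A) :
    f (conicForm d i x) = conicForm (f ∘ d) i (f ∘ x) := by
  rw [conicForm, f.map_det, conicForm]
  congr 1
  refine funext (Fin.cases (comp_veronese f x) fun r => ?_)
  exact (comp_veronese f _).trans (congrArg veronese (comp_cuspPoint f _))

lemma lineForm_cuspPoint_sub (d : Fin 6 → A) (i j : Fin 6) :
    lineForm d i j (cuspPoint (d i) - cuspPoint (d j)) = 0 := by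
  simp only [lineForm, cuspPoint, Matrix.det_fin_three, Matrix.of_apply, Matrix.cons_val,
    Pi.sub_apply]
  ring

lemma conicForm_cuspPoint_succAbove (d : Fin 6 → A) (i : Fin 6) (r : Fin 5) :
    conicForm d i (cuspPoint (d (i.succAbove r))) = 0 :=
  Matrix.det_zero_of_row_eq (Fin.succ_ne_zero r).symm rfl

/-- The cubic form `ℓ₀₂ ℓ₁₄ ℓ₃₄`, which is the section `F₀₂ F₁₄ F₃₄` up to a factor. -/
def threeLines (d : Fin 6 → A) (x : Fin 3 → A) : A :=
  lineForm d 0 2 x * lineForm d 1 4 x * lineForm d 3 4 x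

/-- A `2 × 2` minor of the values of the cubic forms `ℓ₀₂ ℓ₁₄ ℓ₃₄` and `ℓ₀₄ q₅` at two zeros of
`ℓ₂₄ q₂`, one on the conic and one on the line. -/
def sectionMinor (d : Fin 6 → A) : A :=
  let p := cuspPoint (d 5)
  let q := cuspPoint (d 2) - cuspPoint (d 4)
  threeLines d p * (lineForm d 0 4 q * conicForm d 5 q) -
    threeLines d q * (lineForm d 0 4 p * conicForm d 5 p)

lemma map_threeLines (f : A →+* B) (d : Fin 6 → A) (x : Fin 3 → A) :
    f (threeLines d x) = threeLines (f ∘ d) (f ∘ x) := by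
  simp only [threeLines, map_mul, map_lineForm]

lemma map_sectionMinor (f : A →+* B) (d : Fin 6 → A) :
    f (sectionMinor d) = sectionMinor (f ∘ d) := by
  have hsub : f ∘ (cuspPoint (d 2) - cuspPoint (d 4)) =
      cuspPoint (f (d 2)) - cuspPoint (f (d 4)) := by
    rw [← comp_cuspPoint, ← comp_cuspPoint]
    exact funext fun _ => map_sub f _ _
  simp only [sectionMinor, map_sub, map_mul, map_threeLines, map_lineForm, map_conicForm,
    comp_cuspPoint, hsub, Function.comp_apply]

lemma sectionMinor_eq_zero {d : Fin 6 → A} {b c : A}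
    (h : ∀ x, threeLines d x =
      b * (lineForm d 0 4 x * conicForm d 5 x) + c * (lineForm d 2 4 x * conicForm d 2 x)) :
    sectionMinor d = 0 := by
  have hconic : conicForm d 2 (cuspPoint (d 5)) = 0 := conicForm_cuspPoint_succAbove d 2 4
  simp only [sectionMinor, h, hconic, lineForm_cuspPoint_sub]
  ring

end PlaneForms

section CoxSections

lemma sectionMinor_dK_ne_zero : sectionMinor dK ≠ 0 := by
  intro h
  have hX : sectionMinor (X : Fin 6 → MvPolynomial (Fin 6) ℚ) = 0 := by
    refine IsFractionRing.injective _ KK ?_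
    rw [map_sectionMinor, map_zero]
    exact h
  have hval : sectionMinor (![1, 2, 3, -2, 0, -1] : Fin 6 → ℚ) ≠ 0 := by
    decide +kernel
  apply hval
  have := congrArg (eval ![1, 2, 3, -2, 0, -1]) hX
  rw [map_sectionMinor, map_zero] at this
  simpa [Function.comp_def] using this

lemma dL_eq_algebraMap (i : Fin 6) : dL i = algebraMap KK LF (dK i) :=
  (IsScalarTower.algebraMap_apply KK SRing LF (dK i)).symm

lemma dL_sub_ne_zero {i j : Fin 6} (h : i ≠ j) : dL i - dL j ≠ 0 := by
  rw [sub_ne_zero, dL_eq_algebraMap, dL_eq_algebraMap, dK, dK]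
  exact ((algebraMap KK LF).injective.comp
    ((IsFractionRing.injective (MvPolynomial (Fin 6) ℚ) KK).comp X_injective)).ne h

lemma tL_ne_zero (i : Fin 6) : tL i ≠ 0 :=
  (FaithfulSMul.algebraMap_eq_zero_iff SRing LF).not.2 (X_ne_zero _)

lemma threeLines_ne_add (b c : KK) :
    threeLines dL xL ≠ algebraMap KK LF b * (lineForm dL 0 4 xL * conicForm dL 5 xL) +
      algebraMap KK LF c * (lineForm dL 2 4 xL * conicForm dL 2 xL) := by
  intro h
  let xS : Fin 3 → SRing := fun a => X (a.castLE (by omega))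
  let dS : Fin 6 → SRing := fun i => C (dK i)
  have hx : algebraMap SRing LF ∘ xS = xL := rfl
  have hd : algebraMap SRing LF ∘ dS = dL := rfl
  have hS : threeLines dS xS = C b * (lineForm dS 0 4 xS * conicForm dS 5 xS) +
      C c * (lineForm dS 2 4 xS * conicForm dS 2 xS) := by
    refine IsFractionRing.injective SRing LF ?_
    simp only [map_add, map_mul, map_threeLines, map_lineForm, map_conicForm, hx, hd]
    exact h
  refine sectionMinor_dK_ne_zero (sectionMinor_eq_zero (b := b) (c := c) fun x => ?_)
  let y : Fin 9 → KK := Fin.append x (0 : Fin 6 → KK)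
  have hx' : eval y ∘ xS = x := funext fun a => (eval_X _).trans (Fin.append_left x _ a)
  have hd' : eval y ∘ dS = dK := funext fun i => eval_C _
  simpa only [map_add, map_mul, map_threeLines, map_lineForm, map_conicForm, hx', hd', eval_C]
    using congrArg (eval y) hS

lemma cpl_eq_succAbove (i : Fin 6) (r : Fin 5) : cpl i r = i.succAbove r := by
  have hcard : (Finset.univ.erase i).card = 5 := by
    rw [Finset.card_erase_of_mem (Finset.mem_univ i)]
    rfl
  rw [Finset.orderEmbOfFin_unique hcard (f := i.succAbove)
    (fun r => Finset.mem_erase.2 ⟨i.succAbove_ne r, Finset.mem_univ _⟩)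
    (Fin.strictMono_succAbove i)]
  rfl

lemma ellL_eq_lineForm (i j : Fin 6) : ellL i j = lineForm dL i j xL := by
  simp [ellL, lineForm, cuspPoint, Matrix.det_fin_three]

lemma conicL_eq_conicForm (i : Fin 6) : conicL i = conicForm dL i xL := by
  rw [conicL, conicForm]
  congr 1
  refine funext (Fin.cases rfl fun r => funext fun a => ?_)
  simp only [Matrix.of_apply, Fin.cases_succ, Fin.cons_succ, cpl_eq_succAbove, veronese, cuspPoint]
  fin_cases a <;> simp [← pow_mul, ← pow_succ']

lemma phiC_C (a : KK) : phiC (C a) = algebraMap KK LF a :=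
  phiC.commutes a

lemma phiC_Ev (i : Fin 6) : phiC (Ev i) = tL i :=
  aeval_X _ _

lemma phiC_Fv {i j : Fin 6} (h : i < j) :
    phiC (Fv i j) = lineForm dL i j xL / ((dL j - dL i) * (tL i * tL j)) := by
  rw [Fv, dif_pos (by simpa using h.ne), ← ellL_eq_lineForm]
  refine (aeval_X _ _).trans ?_
  simp [h.le]

lemma phiC_Gv (i : Fin 6) : phiC (Gv i) = tL i * conicForm dL i xL / ∏ m, tL m := by
  rw [← Finset.mul_prod_erase Finset.univ tL (Finset.mem_univ i),
    mul_div_mul_left _ _ (tL_ne_zero i), ← conicL_eq_conicForm]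
  exact aeval_X _ _

/-- The sections `F₀₂ F₁₄ F₃₄`, `E₀ F₀₄ G₅` and `E₅ F₂₄ G₂` of one divisor class become the three
cubic forms of `threeLines_ne_add` after multiplication by a common factor. -/
lemma phiC_sub_ne_zero (a b : KK) :
    phiC (Fv 0 2 * Fv 1 4 * Fv 3 4 - C a * (Ev 0 * Fv 0 4 * Gv 5) -
      C b * (Ev 5 * Fv 2 4 * Gv 2)) ≠ 0 := by
  intro h
  let δ : KK := (dK 2 - dK 0) * (dK 4 - dK 1) * (dK 4 - dK 3)
  refine threeLines_ne_add (δ * a / (dK 4 - dK 0)) (δ * b / (dK 4 - dK 2)) ?_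
  have ht := tL_ne_zero
  have hd : ∀ i j, i ≠ j → dL i - dL j ≠ 0 := fun _ _ => dL_sub_ne_zero
  simp only [map_sub, map_mul, phiC_C, phiC_Ev, phiC_Gv, Fin.prod_univ_six,
    phiC_Fv (show (0 : Fin 6) < 2 by decide), phiC_Fv (show (0 : Fin 6) < 4 by decide),
    phiC_Fv (show (1 : Fin 6) < 4 by decide), phiC_Fv (show (2 : Fin 6) < 4 by decide),
    phiC_Fv (show (3 : Fin 6) < 4 by decide)] at h
  simp only [δ, map_div₀, map_mul, map_sub, ← dL_eq_algebraMap, threeLines]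
  field_simp [ht, hd] at h ⊢
  linear_combination h

end CoxSections

section CubicRelation

/-- The index of the variable `E_i`. -/
def eVar (i : Fin 6) : CVar :=
  Sum.inl i

/-- The index of the variable `F_{ij}`. -/
def fVar (i j : Fin 6) (h : i ≠ j := by decide) : CVar :=
  Sum.inr (Sum.inl ⟨s(i, j), by simpa using h⟩)

/-- The index of the variable `G_i`. -/
def gVar (i : Fin 6) : CVar :=
  Sum.inr (Sum.inr i)

/-- The exponent vector of the cubic monomial `x_u x_v x_w`. -/
def tripleExponent (u v w : CVar) : CVar →₀ ℕ :=
  pairExponent s(u, v) + Finsupp.single w 1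

lemma monomial_tripleExponent (u v w : CVar) (a : KK) :
    monomial (tripleExponent u v w) a = C a * (X u * X v * X w) := by
  rw [X, X, X, monomial_mul, monomial_mul, C_mul_monomial, one_mul, one_mul, mul_one]
  rfl

lemma exists_cubic_mem_span {G : Finset (MvPolynomial CVar KK)} (hcard : G.card = 270)
    (hG : ∀ g ∈ G, IsConicTrinomial g)
    (hinj : Set.InjOn support (G : Set (MvPolynomial CVar KK))) :
    ∃ a b κ : KK, Fv 0 2 * Fv 1 4 * Fv 3 4 - C a * (Ev 0 * Fv 0 4 * Gv 5) -
      C b * (Ev 5 * Fv 2 4 * Gv 2) - C κ * (Ev 5 * Fv 4 5 * Gv 5) ∈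
        Ideal.span (G : Set (MvPolynomial CVar KK)) := by
  have hrel := @exists_combination_mem_span_of_mem_conicFibres KK _ G hcard hG hinj
  generalize Ideal.span (G : Set (MvPolynomial CVar KK)) = I at hrel ⊢
  obtain ⟨α₁, β₁, h₁⟩ : ∃ α β : KK,
      Fv 0 2 * Fv 3 4 - C α * (Fv 0 4 * Fv 2 3) - C β * (Ev 1 * Gv 5) ∈ I :=
    hrel (c := fVar 1 5) (by decide +kernel)
  obtain ⟨α₂, β₂, h₂⟩ : ∃ α β : KK,
      Fv 1 4 * Fv 2 3 - C α * (Ev 0 * Gv 5) - C β * (Ev 5 * Gv 0) ∈ I :=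
    hrel (c := fVar 0 5) (by decide +kernel)
  obtain ⟨α₃, β₃, h₃⟩ : ∃ α β : KK,
      Ev 1 * Fv 1 4 - C α * (Ev 0 * Fv 0 4) - C β * (Ev 5 * Fv 4 5) ∈ I :=
    hrel (c := gVar 4) (by decide +kernel)
  obtain ⟨α₄, β₄, h₄⟩ : ∃ α β : KK,
      Fv 0 4 * Gv 0 - C α * (Fv 2 4 * Gv 2) - C β * (Fv 4 5 * Gv 5) ∈ I :=
    hrel (c := eVar 4) (by decide +kernel)
  refine ⟨α₁ * α₂ + β₁ * α₃, α₁ * β₂ * α₄, α₁ * β₂ * β₄ + β₁ * β₃, ?_⟩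
  have hsum := add_mem (add_mem (I.mul_mem_left (Fv 1 4) h₁) (I.mul_mem_left (C α₁ * Fv 0 4) h₂))
    (add_mem (I.mul_mem_left (C β₁ * Gv 5) h₃) (I.mul_mem_left (C (α₁ * β₂) * Ev 5) h₄))
  convert hsum using 1
  simp only [map_add, map_mul]
  ring

lemma mWeight_tripleExponent (u v w : CVar) :
    mWeight wCox (tripleExponent u v w) = (natWeight u + natWeight v + natWeight w : ℕ) := by
  rw [tripleExponent, mWeight_add, mWeight_pairExponent, mWeight_single_one]
  simp [pairSum, wCox_eq_natWeight]

lemma C_mul_mem_restrictSupport {m : CVar →₀ ℕ} {u v w : CVar}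
    (h : mWeight wCox m < (natWeight u + natWeight v + natWeight w : ℕ)) (a : KK) :
    C a * (X u * X v * X w) ∈ restrictSupport KK {n | mWeight wCox m < mWeight wCox n} := by
  rw [← monomial_tripleExponent, monomial_mem_restrictSupport]
  exact .inl (h.trans_eq (mWeight_tripleExponent u v w).symm)

lemma Ev_mul_Fv_mul_Gv_mem_initialIdeal {I : Ideal (MvPolynomial CVar KK)}
    (hI : I ≤ RingHom.ker phiC) {a b κ : KK}
    (h : Fv 0 2 * Fv 1 4 * Fv 3 4 - C a * (Ev 0 * Fv 0 4 * Gv 5) -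
      C b * (Ev 5 * Fv 2 4 * Gv 2) - C κ * (Ev 5 * Fv 4 5 * Gv 5) ∈ I) :
    Ev 5 * Fv 4 5 * Gv 5 ∈ initialIdeal wCox I := by
  have hκ : κ ≠ 0 := by
    rintro rfl
    rw [C_0, zero_mul, sub_zero] at h
    exact phiC_sub_ne_zero a b (hI h)
  let m : CVar →₀ ℕ := tripleExponent (eVar 5) (fVar 4 5) (gVar 5)
  have hm (c : KK) : monomial m c = C c * (Ev 5 * Fv 4 5 * Gv 5) :=
    monomial_tripleExponent _ _ _ _
  have hweight : mWeight wCox m < (2 : ℕ) := by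
    rw [mWeight_tripleExponent, Nat.cast_lt]
    decide
  have hr : C 1 * (Fv 0 2 * Fv 1 4 * Fv 3 4) - C a * (Ev 0 * Fv 0 4 * Gv 5) -
      C b * (Ev 5 * Fv 2 4 * Gv 2) ∈ restrictSupport KK {n | mWeight wCox m < mWeight wCox n} :=
    sub_mem (sub_mem
      (C_mul_mem_restrictSupport (u := fVar 0 2) (v := fVar 1 4) (w := fVar 3 4) hweight 1)
      (C_mul_mem_restrictSupport (u := eVar 0) (v := fVar 0 4) (w := gVar 5) hweight a))
      (C_mul_mem_restrictSupport (u := eVar 5) (v := fVar 2 4) (w := gVar 2) hweight b)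
  have hmem : monomial m (-κ) + (C 1 * (Fv 0 2 * Fv 1 4 * Fv 3 4) -
      C a * (Ev 0 * Fv 0 4 * Gv 5) - C b * (Ev 5 * Fv 2 4 * Gv 2)) ∈ I := by
    rw [hm, C_1, one_mul, C_neg]
    convert h using 1
    ring
  simpa only [hm, C_1, one_mul] using monomial_mem_initialIdeal (neg_ne_zero.2 hκ) hr hmem

end CubicRelation

/-- let `G` be the set of the 270 trinomial generators of the
Cox ideal `I_X` (the ten trinomials `T_{1,jkl}` together with their 260
translates under the Weyl group `W(E₆)`; these are pinned down, up to a
nonzero scalar on each generator, by the hypotheses below, which characterize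
them as the 270 trinomial relations supported on three reducible members of a
conic bundle class).  Then for the weight vector `w` of the paper: (i) the
initial form of each of the 270 generators is not a monomial, and (ii) the
monomial `E₆·F₅₆·G₆` lies in the initial ideal `in_w(I_X)` of the ideal
`I_X` generated by `G`.  Hence `w` lies in the tropical prevariety of the
270 generators but not in the tropical variety of `I_X`: the 270 trinomial
generators are not a tropical basis. -/
theorem stmt_5 (G : Finset (MvPolynomial CVar KK))
    (hcard : G.card = 270)
    (hbase : ∀ j k l : Fin 6, 0 < j → j < k → k < l → T 0 j k l ∈ G)
    (hker : ∀ g ∈ G, phiC g = 0)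
    (hsupp : ∀ g ∈ G, g.support.card = 3)
    (hquad : ∀ g ∈ G, ∀ m ∈ g.support,
      ∃ u v : CVar, u ≠ v ∧ m = Finsupp.single u 1 + Finsupp.single v 1)
    (hdeg : ∀ g ∈ G, ∀ m ∈ g.support, ∀ m' ∈ g.support, picDegM m = picDegM m')
    (hdistinct : ∀ g ∈ G, ∀ g' ∈ G, g ≠ g' → g.support ≠ g'.support) :
    (∀ f ∈ G, ¬ IsMonomial (initialForm wCox f)) ∧
    Ev 5 * Fv 4 5 * Gv 5 ∈
      initialIdeal wCox (Ideal.span (G : Set (MvPolynomial CVar KK))) := by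
  have hG : ∀ g ∈ G, IsConicTrinomial g := fun g hg => ⟨hsupp g hg, hquad g hg, hdeg g hg⟩
  have hinj : Set.InjOn support (G : Set (MvPolynomial CVar KK)) := fun g hg g' hg' h =>
    by_contra fun hne => hdistinct g hg g' hg' hne h
  have hspan : Ideal.span (G : Set (MvPolynomial CVar KK)) ≤ RingHom.ker phiC :=
    Ideal.span_le.2 hker
  refine ⟨fun f hf => (hG f hf).not_isMonomial_initialForm_wCox, ?_⟩
  obtain ⟨a, b, κ, hmem⟩ := exists_cubic_mem_span hcard hG hinj
  exact Ev_mul_Fv_mul_Gv_mem_initialIdeal hspan hmem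

end
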